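/- Let n ≥ 2 and let K, T ⊆ ℝⁿ be compact sets each with connected boundary. Then vol((∂K + ∂T)/2) ≥ √(vol(K)·vol(T)), where (∂K + ∂T)/2 = {(x+y)/2 : x ∈ ∂K, y ∈ ∂T}. -/

import Mathlib

open MeasureTheory Pointwise

/-!
Let `z = x + y` with `x ∈ K` and `y ∈ T`, and suppose that `z ∉ ∂K + ∂T`. Then `K` and `z - T` meet
and have disjoint connected boundaries, and together they do not fill the noncompact space; so one
of them contains the other. Thus `K + T` is covered by `∂K + ∂T` and the two Minkowski differences
`{z | z - T ⊆ K}` and `{z | z - K ⊆ T}`.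

Write `a` and `b` for the `d`-th roots of the measures of `K` and `T`. By the Brunn–Minkowski
inequality, `K + T` has measure at least `(a + b) ^ d`, one of the two differences is null and the
other has measure at most `|a - b| ^ d`. Superadditivity of `x ↦ x ^ (d / 2)` for `d ≥ 2`, applied
to `(a + b) ^ 2 = 4ab + (a - b) ^ 2`, then leaves `∂K + ∂T` a measure of at least
`2 ^ d * (ab) ^ (d / 2)`. The Brunn–Minkowski inequality itself is deduced from the
Prékopa–Leindler inequality, which holds on the line by a layer-cake argument and passes to
products of measures.
-/

open Set
open scoped ENNReal

section Frontier

variable {X : Type*} [TopologicalSpace X] {s t : Set X}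

lemma subset_interior_or_subset_interior_compl_of_disjoint_frontier (hs : IsPreconnected s)
    (hst : Disjoint s (frontier t)) : s ⊆ interior t ∨ s ⊆ interior tᶜ := by
  refine hs.subset_or_subset isOpen_interior isOpen_interior
    (disjoint_compl_right.mono interior_subset interior_subset) fun x hx ↦ ?_
  rw [← compl_frontier_eq_union_interior]
  exact hst.notMem_of_mem_left hx

lemma union_eq_empty_or_univ_of_frontier_subset_interior [PreconnectedSpace X]
    (hst : frontier s ⊆ interior t) (hts : frontier t ⊆ interior s) :
    s ∪ t = ∅ ∨ s ∪ t = univ := by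
  rw [← frontier_eq_empty_iff, ← subset_empty_iff]
  refine (frontier_union_subset s t).trans ?_
  rw [closure_compl, closure_compl]
  rintro x (⟨hxs, hxt⟩ | ⟨hxs, hxt⟩)
  · exact hxt (hst hxs)
  · exact hxs (hts hxt)

lemma subset_or_subset_of_disjoint_frontier [PreconnectedSpace X]
    (hs : IsPreconnected (frontier s)) (ht : IsPreconnected (frontier t))
    (hst : Disjoint (frontier s) (frontier t)) (hinter : (s ∩ t).Nonempty)
    (hunion : s ∪ t ≠ univ) : s ⊆ t ∨ t ⊆ s := by
  obtain ⟨x, hxs, hxt⟩ := hinter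
  -- After complementing `s` or `t`, each frontier lies in the interior of the other set.
  rcases subset_interior_or_subset_interior_compl_of_disjoint_frontier hs hst with h | h <;>
    rcases subset_interior_or_subset_interior_compl_of_disjoint_frontier ht hst.symm with h' | h'
  · rcases union_eq_empty_or_univ_of_frontier_subset_interior h h' with hempty | huniv
    · exact absurd hempty (Nonempty.ne_empty ⟨x, .inl hxs⟩)
    · exact absurd huniv hunion
  · rw [← frontier_compl] at h
    rcases union_eq_empty_or_univ_of_frontier_subset_interior h h' with hempty | huniv
    · exact absurd hempty (Nonempty.ne_empty ⟨x, .inr hxt⟩)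
    · exact .inl (compl_compl s ▸ compl_subset_iff_union.2 huniv)
  · rw [← frontier_compl] at h'
    rcases union_eq_empty_or_univ_of_frontier_subset_interior h h' with hempty | huniv
    · exact absurd hempty (Nonempty.ne_empty ⟨x, .inl hxs⟩)
    · exact .inr (compl_compl t ▸ compl_subset_iff_union.2 (union_comm s tᶜ ▸ huniv))
  · rw [← frontier_compl] at h h'
    rcases union_eq_empty_or_univ_of_frontier_subset_interior h h' with hempty | huniv
    · exact .inl fun y _ ↦ compl_empty_iff.1 (union_empty_iff.1 hempty).2 ▸ mem_univ y
    · rw [← compl_inter, compl_univ_iff] at huniv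
      exact absurd huniv (Nonempty.ne_empty ⟨x, hxs, hxt⟩)

end Frontier

section MinkowskiSub

variable {E : Type*} [AddCommGroup E]

/-- The Minkowski difference (erosion) of `A` by `B`, that is, the set of all translation vectors
that carry `B` into `A`. -/
def minkowskiSub (A B : Set E) : Set E := {z | z +ᵥ B ⊆ A}

lemma minkowskiSub_add_subset (A B : Set E) : minkowskiSub A B + B ⊆ A := by
  rintro _ ⟨z, hz, y, hy, rfl⟩
  exact hz (vadd_mem_vadd_set hy)

lemma isClosed_minkowskiSub [TopologicalSpace E] [ContinuousAdd E] {A : Set E} (hA : IsClosed A)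
    (B : Set E) : IsClosed (minkowskiSub A B) := by
  have : minkowskiSub A B = ⋂ y ∈ B, (· + y) ⁻¹' A := by
    ext z
    simp only [minkowskiSub, mem_ofPred_eq, vadd_set_subset_iff, vadd_eq_add,
      mem_iInter, mem_preimage]
  rw [this]
  exact isClosed_biInter fun y _ ↦ hA.preimage (by fun_prop)

variable [TopologicalSpace E] [IsTopologicalAddGroup E] [PreconnectedSpace E] [NoncompactSpace E]

lemma add_subset_frontier_add_frontier_union_minkowskiSub {K T : Set E}
    (hK : IsCompact K) (hT : IsCompact T) (hbK : IsPreconnected (frontier K))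
    (hbT : IsPreconnected (frontier T)) :
    K + T ⊆ frontier K + frontier T ∪ (minkowskiSub K (-T) ∪ minkowskiSub T (-K)) := by
  rintro _ ⟨x, hx, y, hy, rfl⟩
  by_cases hz : x + y ∈ frontier K + frontier T
  · exact .inl hz
  let φ := Homeomorph.subLeft (x + y)
  have hfrontier : frontier (φ '' T) = φ '' frontier T := (φ.image_frontier T).symm
  have hdisj : Disjoint (frontier K) (frontier (φ '' T)) := by
    rw [hfrontier, disjoint_left]
    rintro _ hw ⟨v, hv, rfl⟩
    exact hz ⟨_, hw, v, hv, sub_add_cancel _ _⟩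
  have hconn : IsPreconnected (frontier (φ '' T)) :=
    hfrontier ▸ hbT.image φ φ.continuous.continuousOn
  refine .inr <| (subset_or_subset_of_disjoint_frontier hbK hconn hdisj
    ⟨x, hx, y, hy, add_sub_cancel_right _ _⟩
    (hK.union (hT.image φ.continuous)).ne_univ).symm.imp (fun h ↦ ?_) fun h ↦ ?_
  · rintro _ ⟨w, hw, rfl⟩
    simpa [φ, sub_eq_add_neg] using h (mem_image_of_mem φ hw)
  · rintro _ ⟨w, hw, rfl⟩
    obtain ⟨v, hv, hvw⟩ := h hw
    have hv_eq : v = x + y + w := by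
      rw [← sub_neg_eq_add, ← hvw]
      exact (sub_sub_cancel _ _).symm
    rwa [hv_eq] at hv

end MinkowskiSub

section LIntegral

lemma volume_restrict_Ioi_setOf_ofReal_lt (a : ℝ≥0∞) :
    volume.restrict (Ioi 0) {u : ℝ | ENNReal.ofReal u < a} = a := by
  rw [Measure.restrict_apply (measurableSet_lt ENNReal.measurable_ofReal measurable_const)]
  induction a with
  | top => simp
  | coe a =>
    have hIoo : {u : ℝ | ENNReal.ofReal u < a} ∩ Ioi 0 = Ioo 0 (a : ℝ) := by
      ext u
      rw [inter_comm]
      refine and_congr_right fun hu ↦ ?_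
      rw [mem_ofPred_eq, ENNReal.ofReal_lt_iff_lt_toReal (le_of_lt hu) ENNReal.coe_ne_top,
        ENNReal.coe_toReal]
    simp [hIoo]

lemma lintegral_eq_lintegral_measure_ofReal_lt {α : Type*} [MeasurableSpace α] (μ : Measure α)
    [SFinite μ] {f : α → ℝ≥0∞} (hf : Measurable f) :
    ∫⁻ x, f x ∂μ = ∫⁻ u in Ioi (0 : ℝ), μ {x | ENNReal.ofReal u < f x} := by
  have hS : MeasurableSet {p : α × ℝ | ENNReal.ofReal p.2 < f p.1} :=
    measurableSet_lt (by fun_prop) (by fun_prop)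
  calc ∫⁻ x, f x ∂μ = ∫⁻ x, volume.restrict (Ioi 0) {u : ℝ | ENNReal.ofReal u < f x} ∂μ := by
        simp only [volume_restrict_Ioi_setOf_ofReal_lt]
    _ = (μ.prod (volume.restrict (Ioi 0))) {p : α × ℝ | ENNReal.ofReal p.2 < f p.1} :=
        (Measure.prod_apply hS).symm
    _ = ∫⁻ u in Ioi (0 : ℝ), μ {x | ENNReal.ofReal u < f x} := Measure.prod_apply_symm hS

lemma tendsto_lintegral_min_natCast {α : Type*} [MeasurableSpace α] (μ : Measure α)
    {f : α → ℝ≥0∞} (hf : Measurable f) :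
    Filter.Tendsto (fun k : ℕ ↦ ∫⁻ x, min (f x) k ∂μ) Filter.atTop (nhds (∫⁻ x, f x ∂μ)) := by
  refine lintegral_tendsto_of_tendsto_of_monotone
    (fun k ↦ (hf.min measurable_const).aemeasurable) (.of_forall fun x k l hkl ↦
      min_le_min_left _ (Nat.cast_le.2 hkl))
    (.of_forall fun x ↦ ?_)
  simpa using (tendsto_const_nhds (x := f x)).min ENNReal.tendsto_nat_nhds_top

end LIntegral

lemma ennreal_geom_mean_le_arith_mean2_weighted {a b : ℝ} (ha : 0 < a) (hb : 0 < b)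
    (hab : a + b = 1) (x y : ℝ≥0∞) :
    x ^ a * y ^ b ≤ ENNReal.ofReal a * x + ENNReal.ofReal b * y := by
  induction x with
  | top => simp [ENNReal.mul_top, ha]
  | coe x =>
    induction y with
    | top => simp [ENNReal.mul_top, hb]
    | coe y =>
      lift a to NNReal using ha.le
      lift b to NNReal using hb.le
      rw [← ENNReal.coe_rpow_of_nonneg _ a.coe_nonneg, ← ENNReal.coe_rpow_of_nonneg _ b.coe_nonneg,
        ENNReal.ofReal_coe_nnreal, ENNReal.ofReal_coe_nnreal]
      exact_mod_cast NNReal.geom_mean_le_arith_mean2_weighted a b x y (by exact_mod_cast hab)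

section BrunnMinkowskiReal

variable {A B : Set ℝ} {a b : ℝ}

lemma volume_add_volume_le_volume_add_of_isCompact (hA : IsCompact A) (hB : IsCompact B)
    (hA₀ : A.Nonempty) (hB₀ : B.Nonempty) : volume A + volume B ≤ volume (A + B) := by
  have hsub : (sInf B +ᵥ A) ∪ (sSup A +ᵥ B) ⊆ A + B := by
    refine union_subset ?_ (vadd_set_subset_add (hA.sSup_mem hA₀))
    rw [add_comm A]
    exact vadd_set_subset_add (hB.sInf_mem hB₀)
  have hdisj : AEDisjoint volume (sInf B +ᵥ A) (sSup A +ᵥ B) := by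
    refine measure_mono_null (t := {sInf B + sSup A}) ?_ (by simp)
    rintro _ ⟨⟨x, hx, rfl⟩, y, hy, hxy⟩
    have hxA := le_csSup hA.bddAbove hx
    have hyB := csInf_le hB.bddBelow hy
    simp only [vadd_eq_add, mem_singleton_iff] at hxy ⊢
    linarith
  calc volume A + volume B = volume (sInf B +ᵥ A) + volume (sSup A +ᵥ B) := by
        rw [measure_vadd, measure_vadd]
    _ = volume ((sInf B +ᵥ A) ∪ (sSup A +ᵥ B)) :=
        (measure_union₀ (hB.vadd _).measurableSet.nullMeasurableSet hdisj).symm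
    _ ≤ volume (A + B) := measure_mono hsub

lemma volume_add_volume_le_volume_add (hA : MeasurableSet A) (hB : MeasurableSet B)
    (hA₀ : A.Nonempty) (hB₀ : B.Nonempty) : volume A + volume B ≤ volume (A + B) := by
  obtain ⟨x, hx⟩ := hA₀
  obtain ⟨y, hy⟩ := hB₀
  rw [hA.measure_eq_iSup_isCompact, hB.measure_eq_iSup_isCompact]
  simp only [iSup_and']
  refine ENNReal.biSup_add_biSup_le' ⟨∅, by simp⟩ ⟨∅, by simp⟩ fun K hK L hL ↦ ?_
  calc volume K + volume L ≤ volume (insert x K) + volume (insert y L) := by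
        gcongr <;> exact subset_insert _ _
    _ ≤ volume (insert x K + insert y L) :=
        volume_add_volume_le_volume_add_of_isCompact (hK.2.insert x) (hL.2.insert y)
          (insert_nonempty x K) (insert_nonempty y L)
    _ ≤ volume (A + B) := by
        gcongr
        exacts [insert_subset hx hK.1, insert_subset hy hL.1]

lemma ofReal_mul_volume_add_le_volume_smul_add_smul (ha : 0 < a) (hb : 0 < b)
    (hA : MeasurableSet A) (hB : MeasurableSet B) (hA₀ : A.Nonempty) (hB₀ : B.Nonempty) :
    ENNReal.ofReal a * volume A + ENNReal.ofReal b * volume B ≤ volume (a • A + b • B) := by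
  convert volume_add_volume_le_volume_add (hA.const_smul₀ a) (hB.const_smul₀ b) hA₀.smul_set
    hB₀.smul_set <;>
  simp [Measure.addHaar_smul, abs_of_pos, *]

end BrunnMinkowskiReal

section Superlevel

variable {E : Type*} [AddCommGroup E] [Module ℝ E] {f g h : E → ℝ≥0∞} {a b : ℝ}

lemma smul_setOf_lt_add_smul_setOf_lt_subset (ha : 0 < a) (hb : 0 < b) (hab : a + b = 1)
    (hfgh : ∀ x y, f x ^ a * g y ^ b ≤ h (a • x + b • y)) (s : ℝ≥0∞) :
    a • {x | s < f x} + b • {y | s < g y} ⊆ {z | s < h z} := by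
  rintro _ ⟨_, ⟨x, hx, rfl⟩, _, ⟨y, hy, rfl⟩, rfl⟩
  calc s = s ^ a * s ^ b := by
        rw [← ENNReal.rpow_add_of_nonneg _ _ ha.le hb.le, hab, ENNReal.rpow_one]
    _ < f x ^ a * g y ^ b :=
        ENNReal.mul_lt_mul (ENNReal.rpow_lt_rpow hx ha) (ENNReal.rpow_lt_rpow hy hb)
    _ ≤ h (a • x + b • y) := hfgh x y

end Superlevel

section PrekopaLeindlerReal

variable {f g h : ℝ → ℝ≥0∞} {a b : ℝ}

lemma ofReal_mul_lintegral_add_le_of_iSup_eq (ha : 0 < a) (hb : 0 < b) (hab : a + b = 1)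
    (hf : Measurable f) (hg : Measurable g) (hh : Measurable h)
    (hfgh : ∀ x y, f x ^ a * g y ^ b ≤ h (a • x + b • y)) (hsup : ⨆ x, f x = ⨆ x, g x) :
    ENNReal.ofReal a * (∫⁻ x, f x) + ENNReal.ofReal b * (∫⁻ x, g x) ≤ ∫⁻ x, h x := by
  rw [lintegral_eq_lintegral_measure_ofReal_lt _ hf, lintegral_eq_lintegral_measure_ofReal_lt _ hg,
    lintegral_eq_lintegral_measure_ofReal_lt _ hh,
    ← lintegral_const_mul' _ _ ENNReal.ofReal_ne_top,
    ← lintegral_const_mul' _ _ ENNReal.ofReal_ne_top]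
  refine (le_lintegral_add _ _).trans (lintegral_mono fun u ↦ ?_)
  rcases lt_or_ge (ENNReal.ofReal u) (⨆ x, f x) with hu | hu
  · refine (ofReal_mul_volume_add_le_volume_smul_add_smul ha hb
      (measurableSet_lt measurable_const hf) (measurableSet_lt measurable_const hg)
      (lt_iSup_iff.1 hu) (lt_iSup_iff.1 (hu.trans_eq hsup))).trans (measure_mono ?_)
    exact smul_setOf_lt_add_smul_setOf_lt_subset ha hb hab hfgh _
  · have hf_empty : {x | ENNReal.ofReal u < f x} = ∅ :=
      eq_empty_of_forall_notMem fun x hx ↦ ((le_iSup f x).trans hu).not_gt hx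
    have hg_empty : {x | ENNReal.ofReal u < g x} = ∅ :=
      eq_empty_of_forall_notMem fun x hx ↦ ((le_iSup g x).trans (hsup.symm.trans_le hu)).not_gt hx
    simp [hf_empty, hg_empty]

lemma lintegral_rpow_mul_lintegral_rpow_le_of_iSup_ne_top (ha : 0 < a) (hb : 0 < b)
    (hab : a + b = 1) (hf : Measurable f) (hg : Measurable g) (hh : Measurable h)
    (hfgh : ∀ x y, f x ^ a * g y ^ b ≤ h (a • x + b • y)) (hf_sup : ⨆ x, f x ≠ ⊤)
    (hg_sup : ⨆ x, g x ≠ ⊤) : (∫⁻ x, f x) ^ a * (∫⁻ x, g x) ^ b ≤ ∫⁻ x, h x := by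
  rcases eq_or_ne (⨆ x, f x) 0 with hf₀ | hf₀
  · simp [ENNReal.iSup_eq_zero.1 hf₀, ha]
  rcases eq_or_ne (⨆ x, g x) 0 with hg₀ | hg₀
  · simp [ENNReal.iSup_eq_zero.1 hg₀, hb]
  set c := (⨆ x, g x) / ⨆ x, f x with hc
  have hc₀ : c ≠ 0 := (ENNReal.div_pos hg₀ hf_sup).ne'
  have hc_top : c ≠ ⊤ := ENNReal.div_ne_top hg_sup hf₀
  have hsup : ⨆ x, c * f x = ⨆ x, g x := by
    rw [← ENNReal.mul_iSup, hc, ENNReal.div_mul_cancel hf₀ hf_sup]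
  have hscaled : ∀ x y, (c * f x) ^ a * g y ^ b ≤ c ^ a * h (a • x + b • y) := fun x y ↦ by
    rw [ENNReal.mul_rpow_of_nonneg _ _ ha.le, mul_assoc]
    gcongr
    exact hfgh x y
  have hmul : c ^ a * ((∫⁻ x, f x) ^ a * (∫⁻ x, g x) ^ b) ≤ c ^ a * ∫⁻ x, h x :=
    calc c ^ a * ((∫⁻ x, f x) ^ a * (∫⁻ x, g x) ^ b)
        = (∫⁻ x, c * f x) ^ a * (∫⁻ x, g x) ^ b := by
          rw [lintegral_const_mul _ hf, ENNReal.mul_rpow_of_nonneg _ _ ha.le, mul_assoc]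
      _ ≤ ENNReal.ofReal a * (∫⁻ x, c * f x) + ENNReal.ofReal b * (∫⁻ x, g x) :=
          ennreal_geom_mean_le_arith_mean2_weighted ha hb hab _ _
      _ ≤ ∫⁻ x, c ^ a * h x :=
          ofReal_mul_lintegral_add_le_of_iSup_eq ha hb hab (hf.const_mul c) hg (hh.const_mul _)
            hscaled hsup
      _ = c ^ a * ∫⁻ x, h x := lintegral_const_mul _ hh
  exact (ENNReal.mul_le_mul_iff_right (ENNReal.rpow_pos (pos_iff_ne_zero.2 hc₀) hc_top).ne'
    (ENNReal.rpow_ne_top_of_nonneg ha.le hc_top)).1 hmul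

end PrekopaLeindlerReal

/-- The measure `μ` satisfies the Prékopa–Leindler inequality, the functional form of the
Brunn–Minkowski inequality. Functions take values in `ℝ≥0∞`, and `h` is required to be measurable
because the sup-convolution of `f` and `g` need not be. -/
def PrekopaLeindler {E : Type*} [AddCommGroup E] [Module ℝ E] [MeasurableSpace E]
    (μ : Measure E) : Prop :=
  ∀ ⦃a b : ℝ⦄, 0 < a → 0 < b → a + b = 1 → ∀ ⦃f g h : E → ℝ≥0∞⦄,
    Measurable f → Measurable g → Measurable h →
    (∀ x y, f x ^ a * g y ^ b ≤ h (a • x + b • y)) →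
    (∫⁻ x, f x ∂μ) ^ a * (∫⁻ x, g x ∂μ) ^ b ≤ ∫⁻ x, h x ∂μ

lemma prekopaLeindler_real : PrekopaLeindler (volume : Measure ℝ) := by
  intro a b ha hb hab f g h hf hg hh hfgh
  rcases eq_or_ne (∫⁻ x, f x) 0 with hf₀ | hf₀
  · simp [hf₀, ha]
  rcases eq_or_ne (∫⁻ x, g x) 0 with hg₀ | hg₀
  · simp [hg₀, hb]
  have hsup (φ : ℝ → ℝ≥0∞) (k : ℕ) : ⨆ x, min (φ x) k ≠ ⊤ :=
    ((iSup_le fun x ↦ min_le_right _ _).trans_lt (ENNReal.natCast_lt_top k)).ne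
  have hlim := ENNReal.Tendsto.mul
    ((tendsto_lintegral_min_natCast volume hf).ennrpow_const a)
    (.inl (by simp [hf₀, ha, ha.not_gt]))
    ((tendsto_lintegral_min_natCast volume hg).ennrpow_const b)
    (.inl (by simp [hg₀, hb, hb.not_gt]))
  refine le_of_tendsto' hlim fun k ↦ ?_
  refine lintegral_rpow_mul_lintegral_rpow_le_of_iSup_ne_top ha hb hab (hf.min measurable_const)
    (hg.min measurable_const) hh (fun x y ↦ ?_) (hsup f k) (hsup g k)
  refine le_trans ?_ (hfgh x y)
  gcongr <;> exact min_le_left _ _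

namespace PrekopaLeindler

variable {E F : Type*} [AddCommGroup E] [Module ℝ E] [MeasurableSpace E]
  [AddCommGroup F] [Module ℝ F] [MeasurableSpace F] {μ : Measure E} {ν : Measure F}

lemma prod [SFinite ν] (hμ : PrekopaLeindler μ) (hν : PrekopaLeindler ν) :
    PrekopaLeindler (μ.prod ν) := by
  intro a b ha hb hab f g h hf hg hh hfgh
  rw [lintegral_prod _ hf.aemeasurable, lintegral_prod _ hg.aemeasurable,
    lintegral_prod _ hh.aemeasurable]
  refine hμ ha hb hab hf.lintegral_prod_right' hg.lintegral_prod_right'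
    hh.lintegral_prod_right' fun x y ↦ ?_
  exact hν ha hb hab (hf.comp measurable_prodMk_left) (hg.comp measurable_prodMk_left)
    (hh.comp measurable_prodMk_left) fun x' y' ↦ hfgh (x, x') (y, y')

lemma smul (hμ : PrekopaLeindler μ) (c : ℝ≥0∞) : PrekopaLeindler (c • μ) := by
  intro a b ha hb hab f g h hf hg hh hfgh
  simp only [lintegral_smul_measure, smul_eq_mul]
  calc (c * ∫⁻ x, f x ∂μ) ^ a * (c * ∫⁻ x, g x ∂μ) ^ b
      = c * ((∫⁻ x, f x ∂μ) ^ a * (∫⁻ x, g x ∂μ) ^ b) := by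
        rw [ENNReal.mul_rpow_of_nonneg _ _ ha.le, ENNReal.mul_rpow_of_nonneg _ _ hb.le,
          mul_mul_mul_comm, ← ENNReal.rpow_add_of_nonneg _ _ ha.le hb.le, hab, ENNReal.rpow_one]
    _ ≤ c * ∫⁻ x, h x ∂μ := by
        gcongr
        exact hμ ha hb hab hf hg hh hfgh

lemma of_measurePreserving (hμ : PrekopaLeindler μ) (φ : E →ₗ[ℝ] F)
    (hφ : MeasurePreserving φ μ ν) : PrekopaLeindler ν := by
  intro a b ha hb hab f g h hf hg hh hfgh
  rw [← hφ.lintegral_comp hf, ← hφ.lintegral_comp hg, ← hφ.lintegral_comp hh]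
  refine hμ ha hb hab (hf.comp hφ.measurable) (hg.comp hφ.measurable) (hh.comp hφ.measurable)
    fun x y ↦ ?_
  simpa only [map_add, map_smul] using hfgh (φ x) (φ y)

lemma measure_rpow_mul_le (hμ : PrekopaLeindler μ) {a b : ℝ} (ha : 0 < a) (hb : 0 < b)
    (hab : a + b = 1) {A B : Set E} (hA : MeasurableSet A) (hB : MeasurableSet B) :
    μ A ^ a * μ B ^ b ≤ μ (a • A + b • B) := by
  let C := toMeasurable μ (a • A + b • B)
  have hind : ∀ x y, A.indicator (1 : E → ℝ≥0∞) x ^ a * B.indicator (1 : E → ℝ≥0∞) y ^ b ≤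
      C.indicator 1 (a • x + b • y) := by
    intro x y
    by_cases hx : x ∈ A
    · by_cases hy : y ∈ B
      · have hxy : a • x + b • y ∈ C := subset_toMeasurable μ _
          (add_mem_add (smul_mem_smul_set hx) (smul_mem_smul_set hy))
        simp [hx, hy, hxy]
      · simp [hy, hb]
    · simp [hx, ha]
  have hC : MeasurableSet C := measurableSet_toMeasurable μ _
  simpa only [lintegral_indicator_one, hA, hB, hC, C, measure_toMeasurable] using
    hμ ha hb hab (measurable_one.indicator hA) (measurable_one.indicator hB)
      (measurable_one.indicator hC) hind

end PrekopaLeindler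

lemma prekopaLeindler_pi (n : ℕ) : PrekopaLeindler (volume : Measure (Fin n → ℝ)) := by
  induction n with
  | zero =>
    intro a b _ _ _ f g h _ _ _ hfgh
    have huniv : (volume : Measure (Fin 0 → ℝ)) univ = 1 := by simp [volume_pi]
    simp only [lintegral_unique, huniv, mul_one]
    convert hfgh default default
  | succ n ih =>
    have hcons : ⇑(Fin.consLinearEquiv ℝ fun _ : Fin (n + 1) ↦ ℝ) =
        (MeasurableEquiv.piFinSuccAbove (fun _ : Fin (n + 1) ↦ ℝ) 0).symm := by
      ext p i
      simp [MeasurableEquiv.piFinSuccAbove]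
    refine (prekopaLeindler_real.prod ih).of_measurePreserving
      (Fin.consLinearEquiv ℝ fun _ ↦ ℝ).toLinearMap ?_
    rw [LinearEquiv.coe_coe, hcons]
    exact (volume_preserving_piFinSuccAbove (fun _ ↦ ℝ) 0).symm

theorem prekopaLeindler_of_isAddHaarMeasure {E : Type*} [NormedAddCommGroup E] [NormedSpace ℝ E]
    [FiniteDimensional ℝ E] [MeasurableSpace E] [BorelSpace E] (μ : Measure E)
    [μ.IsAddHaarMeasure] : PrekopaLeindler μ := by
  let φ : (Fin (Module.finrank ℝ E) → ℝ) ≃L[ℝ] E :=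
    .ofFinrankEq (Module.finrank_fin_fun ℝ)
  have := φ.isAddHaarMeasure_map volume
  rw [Measure.isAddLeftInvariant_eq_smul μ (volume.map φ)]
  exact ((prekopaLeindler_pi _).of_measurePreserving φ.toLinearMap
    (φ.continuous.measurable.measurePreserving _)).smul _

section BrunnMinkowski

open Module

variable {E : Type*} [NormedAddCommGroup E] [NormedSpace ℝ E] [MeasurableSpace E] {A B : Set E}

/-- The volume radius of `A`, up to normalization: the `d`-th root of `μ A`, where `d` is the
dimension of `E`. The Brunn–Minkowski inequality is its superadditivity under Minkowski sums. In
dimension `0` the exponent is `0⁻¹ = 0` and the value is always `1`. -/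
noncomputable def measureRadius (μ : Measure E) (A : Set E) : ℝ≥0∞ :=
  μ A ^ (finrank ℝ E : ℝ)⁻¹

section Basic

variable {μ : Measure E}

lemma measureRadius_mono (hAB : A ⊆ B) : measureRadius μ A ≤ measureRadius μ B := by
  unfold measureRadius
  gcongr

lemma measureRadius_pow (hd : finrank ℝ E ≠ 0) (A : Set E) :
    measureRadius μ A ^ finrank ℝ E = μ A :=
  ENNReal.rpow_inv_natCast_pow hd _

lemma measureRadius_ne_top (hA : μ A ≠ ⊤) : measureRadius μ A ≠ ⊤ :=
  ENNReal.rpow_ne_top_of_nonneg (by positivity) hA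

variable [μ.IsAddLeftInvariant]

lemma measureRadius_le_add_left (hA₀ : A.Nonempty) :
    measureRadius μ B ≤ measureRadius μ (A + B) := by
  obtain ⟨x, hx⟩ := hA₀
  calc measureRadius μ B = measureRadius μ (x +ᵥ B) := by
        rw [measureRadius, measureRadius, measure_vadd]
    _ ≤ measureRadius μ (A + B) := measureRadius_mono (vadd_set_subset_add hx)

lemma measureRadius_le_add_right (hB₀ : B.Nonempty) :
    measureRadius μ A ≤ measureRadius μ (A + B) :=
  add_comm A B ▸ measureRadius_le_add_left hB₀

end Basic

variable [BorelSpace E] [FiniteDimensional ℝ E] (μ : Measure E) [μ.IsAddHaarMeasure]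

lemma measureRadius_neg (A : Set E) : measureRadius μ (-A) = measureRadius μ A := by
  rw [measureRadius, Measure.measure_neg, measureRadius]

lemma measureRadius_smul (hd : finrank ℝ E ≠ 0) (c : ℝ) (A : Set E) :
    measureRadius μ (c • A) = ENNReal.ofReal |c| * measureRadius μ A := by
  rw [measureRadius, Measure.addHaar_smul, ENNReal.mul_rpow_of_nonneg _ _ (by positivity), abs_pow,
    ENNReal.ofReal_pow (abs_nonneg c), ENNReal.pow_rpow_inv_natCast hd, measureRadius]

lemma measure_inv_measureRadius_smul (hd : finrank ℝ E ≠ 0) {r : ℝ} (hr : 0 < r)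
    (hA : measureRadius μ A = ENNReal.ofReal r) : μ (r⁻¹ • A) = 1 := by
  rw [← measureRadius_pow hd, measureRadius_smul μ hd, hA, ← ENNReal.ofReal_mul (abs_nonneg _),
    abs_of_pos (inv_pos.2 hr), inv_mul_cancel₀ hr.ne', ENNReal.ofReal_one, one_pow]

lemma ofReal_add_le_measureRadius_add (hd : finrank ℝ E ≠ 0) (hA : MeasurableSet A)
    (hB : MeasurableSet B) {r s : ℝ} (hr : 0 < r) (hs : 0 < s)
    (hAr : measureRadius μ A = ENNReal.ofReal r) (hBs : measureRadius μ B = ENNReal.ofReal s) :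
    ENNReal.ofReal (r + s) ≤ measureRadius μ (A + B) := by
  have hrs : 0 < r + s := add_pos hr hs
  have hsum : (r / (r + s)) • r⁻¹ • A + (s / (r + s)) • s⁻¹ • B = (r + s)⁻¹ • (A + B) := by
    rw [smul_smul, smul_smul, smul_add]
    congr 2 <;> field_simp
  have hone : 1 ≤ μ ((r + s)⁻¹ • (A + B)) := by
    have hPL := (prekopaLeindler_of_isAddHaarMeasure μ).measure_rpow_mul_le (div_pos hr hrs)
      (div_pos hs hrs) (by field_simp) (hA.const_smul₀ r⁻¹) (hB.const_smul₀ s⁻¹)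
    rwa [measure_inv_measureRadius_smul μ hd hr hAr, measure_inv_measureRadius_smul μ hd hs hBs,
      ENNReal.one_rpow, ENNReal.one_rpow, one_mul, hsum] at hPL
  calc ENNReal.ofReal (r + s)
      ≤ ENNReal.ofReal (r + s) * measureRadius μ ((r + s)⁻¹ • (A + B)) :=
        le_mul_of_one_le_right' (ENNReal.one_le_rpow hone (by positivity))
    _ = measureRadius μ (A + B) := by
        nth_rw 1 [← abs_of_pos hrs]
        rw [← measureRadius_smul μ hd, smul_inv_smul₀ hrs.ne']

theorem measureRadius_add_le (hd : finrank ℝ E ≠ 0) (hA : MeasurableSet A) (hB : MeasurableSet B)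
    (hA₀ : A.Nonempty) (hB₀ : B.Nonempty) :
    measureRadius μ A + measureRadius μ B ≤ measureRadius μ (A + B) := by
  have hA_le := measureRadius_le_add_right (μ := μ) (A := A) hB₀
  have hB_le := measureRadius_le_add_left (μ := μ) (B := B) hA₀
  rcases eq_or_ne (measureRadius μ A) 0 with hA_zero | hA_zero
  · rwa [hA_zero, zero_add]
  rcases eq_or_ne (measureRadius μ B) 0 with hB_zero | hB_zero
  · rwa [hB_zero, add_zero]
  rcases eq_or_ne (measureRadius μ A) ⊤ with hA_top | hA_top
  · exact le_top.trans (hA_top ▸ hA_le)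
  rcases eq_or_ne (measureRadius μ B) ⊤ with hB_top | hB_top
  · exact le_top.trans (hB_top ▸ hB_le)
  rw [← ENNReal.ofReal_toReal hA_top, ← ENNReal.ofReal_toReal hB_top,
    ← ENNReal.ofReal_add ENNReal.toReal_nonneg ENNReal.toReal_nonneg]
  exact ofReal_add_le_measureRadius_add μ hd hA hB (ENNReal.toReal_pos hA_zero hA_top)
    (ENNReal.toReal_pos hB_zero hB_top) (ENNReal.ofReal_toReal hA_top).symm
    (ENNReal.ofReal_toReal hB_top).symm

lemma measure_minkowskiSub_le (hd : finrank ℝ E ≠ 0) (hA : IsClosed A)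
    (hB : MeasurableSet B) (hB₀ : B.Nonempty) (hB_top : μ B ≠ ⊤) :
    μ (minkowskiSub A B) ≤ (measureRadius μ A - measureRadius μ B) ^ finrank ℝ E := by
  rcases (minkowskiSub A B).eq_empty_or_nonempty with h₀ | h₀
  · simp [h₀]
  rw [← measureRadius_pow hd (minkowskiSub A B)]
  gcongr
  refine ENNReal.le_sub_of_add_le_right (measureRadius_ne_top hB_top) ?_
  calc measureRadius μ (minkowskiSub A B) + measureRadius μ B
      ≤ measureRadius μ (minkowskiSub A B + B) :=
        measureRadius_add_le μ hd (isClosed_minkowskiSub hA B).measurableSet hB h₀ hB₀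
    _ ≤ measureRadius μ A := measureRadius_mono (minkowskiSub_add_subset A B)

end BrunnMinkowski

lemma two_pow_mul_rpow_add_sub_pow_le {d : ℕ} (hd : 2 ≤ d) (a b : ℝ≥0∞) :
    2 ^ d * (a * b) ^ (d / 2 : ℝ) + ((a - b) ^ d + (b - a) ^ d) ≤ (a + b) ^ d := by
  wlog hba : b ≤ a generalizing a b
  · simpa only [mul_comm a, add_comm a, add_comm ((a - b) ^ d)] using this b a (le_of_not_ge hba)
  obtain ⟨c, rfl⟩ := exists_add_of_le hba
  have hd_half : (1 : ℝ) ≤ d / 2 := by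
    rw [one_le_div₀ two_pos]
    exact_mod_cast hd
  have hsq_rpow (x : ℝ≥0∞) : (x ^ 2) ^ (d / 2 : ℝ) = x ^ d := by
    rw [← ENNReal.rpow_natCast, ← ENNReal.rpow_natCast, ← ENNReal.rpow_mul]
    congr 1
    push_cast
    ring
  calc 2 ^ d * ((b + c) * b) ^ (d / 2 : ℝ) + ((b + c - b) ^ d + (b - (b + c)) ^ d)
      ≤ 2 ^ d * ((b + c) * b) ^ (d / 2 : ℝ) + c ^ d := by
        rw [tsub_eq_zero_of_le (le_self_add : b ≤ b + c), zero_pow (by lia), add_zero]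
        gcongr
        exact add_tsub_le_left
    _ = (2 ^ 2 * ((b + c) * b)) ^ (d / 2 : ℝ) + (c ^ 2) ^ (d / 2 : ℝ) := by
        rw [ENNReal.mul_rpow_of_nonneg (2 ^ 2) _ (by positivity), hsq_rpow, hsq_rpow]
    _ ≤ (2 ^ 2 * ((b + c) * b) + c ^ 2) ^ (d / 2 : ℝ) := ENNReal.add_rpow_le_rpow_add _ _ hd_half
    _ = (b + c + b) ^ d := by
        rw [← hsq_rpow]
        ring_nf

section BoundarySum

open Module

variable {E : Type*} [NormedAddCommGroup E] [NormedSpace ℝ E] [FiniteDimensional ℝ E]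
  [MeasurableSpace E] [BorelSpace E] (μ : Measure E) [μ.IsAddHaarMeasure] {K T : Set E}

lemma measureRadius_add_pow_le_measure_frontier_add_frontier (hd : finrank ℝ E ≠ 0)
    (hK : IsCompact K) (hT : IsCompact T) (hbK : IsPreconnected (frontier K))
    (hbT : IsPreconnected (frontier T)) (hK₀ : K.Nonempty) (hT₀ : T.Nonempty) :
    (measureRadius μ K + measureRadius μ T) ^ finrank ℝ E ≤ μ (frontier K + frontier T) +
      ((measureRadius μ K - measureRadius μ T) ^ finrank ℝ E +
        (measureRadius μ T - measureRadius μ K) ^ finrank ℝ E) := by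
  have : Nontrivial E := nontrivial_of_finrank_pos (Nat.pos_of_ne_zero hd)
  have : NoncompactSpace E := NormedSpace.noncompactSpace ℝ E
  have hsub {A B : Set E} (hA : IsCompact A) (hB : IsCompact B) (hB₀ : B.Nonempty) :
      μ (minkowskiSub A (-B)) ≤ (measureRadius μ A - measureRadius μ B) ^ finrank ℝ E := by
    rw [← measureRadius_neg μ B]
    exact measure_minkowskiSub_le μ hd hA.isClosed hB.neg.measurableSet hB₀.neg
      hB.neg.measure_lt_top.ne
  calc (measureRadius μ K + measureRadius μ T) ^ finrank ℝ E
      ≤ measureRadius μ (K + T) ^ finrank ℝ E := by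
        gcongr
        exact measureRadius_add_le μ hd hK.measurableSet hT.measurableSet hK₀ hT₀
    _ = μ (K + T) := measureRadius_pow hd _
    _ ≤ μ (frontier K + frontier T ∪ (minkowskiSub K (-T) ∪ minkowskiSub T (-K))) :=
        measure_mono (add_subset_frontier_add_frontier_union_minkowskiSub hK hT hbK hbT)
    _ ≤ μ (frontier K + frontier T) + (μ (minkowskiSub K (-T)) + μ (minkowskiSub T (-K))) :=
        (measure_union_le _ _).trans (by gcongr; exact measure_union_le _ _)
    _ ≤ _ := by gcongr <;> apply hsub <;> assumption

lemma two_pow_mul_rpow_measure_mul_le (hd : 2 ≤ finrank ℝ E)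
    (hK : IsCompact K) (hT : IsCompact T) (hbK : IsPreconnected (frontier K))
    (hbT : IsPreconnected (frontier T)) :
    2 ^ finrank ℝ E * (μ K * μ T) ^ (1 / 2 : ℝ) ≤ μ (frontier K + frontier T) := by
  rcases K.eq_empty_or_nonempty with rfl | hK₀
  · simp
  rcases T.eq_empty_or_nonempty with rfl | hT₀
  · simp
  have hd₀ : finrank ℝ E ≠ 0 := by lia
  have hsub_top {A B : Set E} (hA : IsCompact A) :
      (measureRadius μ A - measureRadius μ B) ^ finrank ℝ E ≠ ⊤ :=
    ENNReal.pow_ne_top (ENNReal.sub_ne_top (measureRadius_ne_top hA.measure_lt_top.ne))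
  have hradius : (measureRadius μ K * measureRadius μ T) ^ (finrank ℝ E / 2 : ℝ) =
      (μ K * μ T) ^ (1 / 2 : ℝ) := by
    rw [measureRadius, measureRadius, ← ENNReal.mul_rpow_of_nonneg _ _ (by positivity),
      ← ENNReal.rpow_mul]
    congr 1
    field_simp
  rw [← hradius, ← ENNReal.add_le_add_iff_right (ENNReal.add_ne_top.2 ⟨hsub_top hK, hsub_top hT⟩)]
  exact (two_pow_mul_rpow_add_sub_pow_le hd _ _).trans
    (measureRadius_add_pow_le_measure_frontier_add_frontier μ hd₀ hK hT hbK hbT hK₀ hT₀)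

theorem boundary_sum_average_lower_bound_general (hd : 2 ≤ finrank ℝ E)
    (hK : IsCompact K) (hT : IsCompact T) (hbK : IsPreconnected (frontier K))
    (hbT : IsPreconnected (frontier T)) :
    √(μ.real K * μ.real T) ≤ μ.real ((2 : ℝ)⁻¹ • (frontier K + frontier T)) := by
  have hcompact : IsCompact (frontier K + frontier T) :=
    (hK.of_isClosed_subset isClosed_frontier hK.isClosed.frontier_subset).add
      (hT.of_isClosed_subset isClosed_frontier hT.isClosed.frontier_subset)
  have hle : 2 ^ finrank ℝ E * √(μ.real K * μ.real T) ≤ μ.real (frontier K + frontier T) := by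
    rw [Real.sqrt_eq_rpow]
    simpa [measureReal_def, ← ENNReal.toReal_rpow] using ENNReal.toReal_mono
      hcompact.measure_lt_top.ne (two_pow_mul_rpow_measure_mul_le μ hd hK hT hbK hbT)
  have hsmul : μ.real ((2 : ℝ)⁻¹ • (frontier K + frontier T)) =
      (2 ^ finrank ℝ E)⁻¹ * μ.real (frontier K + frontier T) := by
    rw [measureReal_def, Measure.addHaar_smul_of_nonneg _ (by positivity)]
    simp [measureReal_def]
  rwa [hsmul, le_inv_mul_iff₀ (by positivity)]

end BoundarySum

theorem boundary_sum_average_lower_bound (n : ℕ) (hn : 2 ≤ n)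
    (K T : Set (EuclideanSpace ℝ (Fin n)))
    (hK : IsCompact K) (hT : IsCompact T)
    (hbK : IsConnected (frontier K)) (hbT : IsConnected (frontier T)) :
    (volume ((2:ℝ)⁻¹ • (frontier K + frontier T))).toReal ≥
      Real.sqrt ((volume K).toReal * (volume T).toReal) :=
  boundary_sum_average_lower_bound_general volume (by simpa using hn) hK hT hbK.isPreconnected
    hbT.isPreconnected
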